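/- Let n be a positive integer, P > 0 a real number, a ∈ {0, 1} ⊂ ℝ, and let W be an n×n complex Hermitian positive semidefinite matrix with P·I − W positive semidefinite. Then for an n×n complex matrix W̃, the equality W̃ = a·W holds if and only if the following four conditions hold: (C10a) a·P·I − W̃ is positive semidefinite; (C10b) W̃ − W + (1 − a)·P·I is positive semidefinite; (C10c) W − W̃ is positive semidefinite; (C10d) W̃ is positive semidefinite. -/

import Mathlib

/-! For `a = 0` the first and last constraints read `Wt ≤ 0` and `0 ≤ Wt` in the Loewner order;
for `a = 1` the second and third read `W ≤ Wt` and `Wt ≤ W`. So in either case antisymmetry of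
the Loewner order determines `Wt`. Conversely, at `Wt = a • W` each constraint reduces to
`0 ≤ 0`, `0 ≤ W` or `W ≤ P • 1`. -/

open ComplexOrder

/-- Antisymmetry of the Loewner order, spelled out through `Matrix.PosSemidef`. -/
theorem posSemidef_antisymm {n : ℕ} {A B : Matrix (Fin n) (Fin n) ℂ}
    (hAB : (B - A).PosSemidef) (hBA : (A - B).PosSemidef) : A = B :=
  Matrix.instPartialOrder.le_antisymm A B hAB hBA

/-- Big-M reformulation of the bilinear product `W̃ = a • W` of a binary scalar
`a ∈ {0,1}` and a Hermitian PSD matrix `W` with `W ⪯ P·I`: the equality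
`W̃ = a • W` holds iff the four Loewner constraints
C10a: `W̃ ⪯ a·P·I`, C10b: `W̃ ⪰ W - (1-a)·P·I`, C10c: `W̃ ⪯ W`, C10d: `W̃ ⪰ 0`
all hold. -/
theorem bigM_reformulation (n : ℕ) (hn : 0 < n) (P : ℝ) (hP : 0 < P)
    (a : ℝ) (ha : a = 0 ∨ a = 1)
    (W : Matrix (Fin n) (Fin n) ℂ) (hW : W.PosSemidef)
    (hWP : ((P : ℝ) • (1 : Matrix (Fin n) (Fin n) ℂ) - W).PosSemidef)
    (Wt : Matrix (Fin n) (Fin n) ℂ) :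
    Wt = a • W ↔
      ((a * P : ℝ) • (1 : Matrix (Fin n) (Fin n) ℂ) - Wt).PosSemidef ∧
      (Wt - W + ((1 - a) * P : ℝ) • (1 : Matrix (Fin n) (Fin n) ℂ)).PosSemidef ∧
      (W - Wt).PosSemidef ∧
      Wt.PosSemidef := by
  constructor
  · rintro rfl
    rcases ha with rfl | rfl
    · refine ⟨by simpa using Matrix.PosSemidef.zero, ?_, by simpa using hW,
        by simpa using Matrix.PosSemidef.zero⟩
      simpa [sub_eq_add_neg, add_comm] using hWP
    · exact ⟨by simpa using hWP, by simpa using Matrix.PosSemidef.zero,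
        by simpa using Matrix.PosSemidef.zero, by simpa using hW⟩
  · rintro ⟨h1, h2, h3, h4⟩
    rcases ha with rfl | rfl
    · rw [zero_smul]
      exact posSemidef_antisymm (by simpa using h1) (by simpa using h4)
    · rw [one_smul]
      exact posSemidef_antisymm h3 (by simpa using h2)
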